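/- For every integer n ≥ 2, the variance of the coefficient distribution of N_n satisfies ∑_{k=1}^{n-1} (k − n/2)² N_{n,k} / N_n(1) = (n² − n − 2)/(8(n−1)); equivalently, ∑_{k=1}^{n-1} (2k − n)² N_{n,k} = (n² − n − 2)·2^{2n−4}. -/

import Mathlib

/-!
Put `j = 2k + 1` and `m = 2n + 2`.  Then `4k(n - k) = (j - 1)(m - 1 - j)` and
`2k - n = j - m/2`, so both sums are sums of `f(j) C(m, j)` over odd `j` for a polynomial `f` of
degree at most four (the terms `k = 0` and `k = n` vanish).  The absorption identity
`j C(m, j) = m C(m - 1, j - 1)` (`sum_absorb`), iterated in `quartic_moment`, gives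
`∑_j j(j-1)⋯(j-r+1) C(m, j) x^j = m(m-1)⋯(m-r+1) x^r (1 + x)^(m-r)`.  At `x = -1` this vanishes
for `r < m`, so, since `m ≥ 6`, the sum over odd `j` is half the full sum at `x = 1`
(`odd_moment`).  It remains to expand `f` in falling factorials.
-/

/-- The coefficients `N_{n,k}` of the type A minuscule polynomial. -/
noncomputable def minusculeCoeff (n k : ℕ) : ℝ :=
  ((k * (n - k) * Nat.choose (2 * n + 2) (2 * k + 1) : ℕ) : ℝ) / (4 * (n : ℝ) + 2)

lemma sum_absorb (f : ℝ → ℝ) (m : ℕ) (x : ℝ) :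
    ∑ j ∈ Finset.range (m + 2), (j : ℝ) * f j * ((m + 1).choose j * x ^ j) =
      (m + 1) * x * ∑ j ∈ Finset.range (m + 1), f (j + 1) * (m.choose j * x ^ j) := by
  rw [Finset.sum_range_succ', Finset.mul_sum]
  simp only [Nat.cast_zero, zero_mul, add_zero]
  refine Finset.sum_congr rfl fun j _ => ?_
  have h : ((m : ℝ) + 1) * m.choose j = (m + 1).choose (j + 1) * (j + 1) := by
    exact_mod_cast Nat.add_one_mul_choose_eq m j
  push_cast
  rw [pow_succ]
  linear_combination (-(f (j + 1) * x ^ j * x)) * h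

lemma sum_choose_pow (m : ℕ) (x : ℝ) :
    ∑ j ∈ Finset.range (m + 1), (1 : ℝ) * (m.choose j * x ^ j) = (1 + x) ^ m := by
  rw [add_comm 1 x, add_pow]
  exact Finset.sum_congr rfl fun j _ => by simp [mul_comm]

/-- Generating function of a quartic, written in the falling factorial basis, against the
binomial coefficients. -/
lemma quartic_moment (a b c d e : ℝ) (q : ℕ) (x : ℝ) :
    ∑ j ∈ Finset.range (q + 5), (a + b * j + c * (j * (j - 1)) + d * (j * ((j - 1) * (j - 2))) +
        e * (j * ((j - 1) * ((j - 2) * (j - 3))))) * ((q + 4).choose j * x ^ j) =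
      a * (1 + x) ^ (q + 4) + b * ((q + 4) * x * (1 + x) ^ (q + 3)) +
      c * ((q + 4) * (q + 3) * x ^ 2 * (1 + x) ^ (q + 2)) +
      d * ((q + 4) * (q + 3) * (q + 2) * x ^ 3 * (1 + x) ^ (q + 1)) +
      e * ((q + 4) * (q + 3) * (q + 2) * (q + 1) * x ^ 4 * (1 + x) ^ q) := by
  have g0 := sum_choose_pow (q + 4) x
  have h1 (m : ℕ) : ∑ j ∈ Finset.range (m + 2), ((j : ℝ) * 1) * ((m + 1).choose j * x ^ j) =
      (m + 1) * x * (1 + x) ^ m := by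
    rw [sum_absorb (fun _ => 1), sum_choose_pow]
  have h2 (m : ℕ) : ∑ j ∈ Finset.range (m + 3), ((j : ℝ) * (j - 1)) *
      ((m + 2).choose j * x ^ j) = (m + 2) * x * ((m + 1) * x * (1 + x) ^ m) := by
    rw [sum_absorb (fun t => t - 1) (m + 1) x, ← h1 m]
    push_cast
    congr 1
    · ring
    · exact Finset.sum_congr rfl fun j _ => by ring
  have h3 (m : ℕ) : ∑ j ∈ Finset.range (m + 4), ((j : ℝ) * ((j - 1) * (j - 2))) *
      ((m + 3).choose j * x ^ j) =
        (m + 3) * x * ((m + 2) * x * ((m + 1) * x * (1 + x) ^ m)) := by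
    rw [sum_absorb (fun t => (t - 1) * (t - 2)) (m + 2) x, ← h2 m]
    push_cast
    congr 1
    · ring
    · exact Finset.sum_congr rfl fun j _ => by ring
  have h4 : ∑ j ∈ Finset.range (q + 5), ((j : ℝ) * ((j - 1) * ((j - 2) * (j - 3)))) *
      ((q + 4).choose j * x ^ j) =
        (q + 4) * x * ((q + 3) * x * ((q + 2) * x * ((q + 1) * x * (1 + x) ^ q))) := by
    rw [sum_absorb (fun t => (t - 1) * ((t - 2) * (t - 3))) (q + 3) x, ← h3 q]
    push_cast
    congr 1
    · ring
    · exact Finset.sum_congr rfl fun j _ => by ring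
  have g1 := h1 (q + 3)
  have g2 := h2 (q + 2)
  have g3 := h3 (q + 1)
  push_cast at g1 g2 g3
  simp only [add_mul _ _ (_ * _), Finset.sum_add_distrib, mul_assoc b, mul_assoc c,
    mul_assoc d, mul_assoc e, ← Finset.mul_sum]
  simp only [one_mul, mul_one] at g0 g1
  rw [g0, g1]
  simp only [← mul_assoc] at g2 g3 h4 ⊢
  rw [g2, g3, h4]
  ring

/-- Odd-indexed terms are extracted by the weight `(1 - (-1) ^ j) / 2`. -/
lemma sum_odd (f : ℕ → ℝ) (N : ℕ) :
    ∑ k ∈ Finset.range N, f (2 * k + 1) =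
      (∑ j ∈ Finset.range (2 * N + 1), f j * 1 ^ j -
        ∑ j ∈ Finset.range (2 * N + 1), f j * (-1) ^ j) / 2 := by
  induction N with
  | zero => simp
  | succ N ih =>
    rw [Finset.sum_range_succ, ih, show 2 * (N + 1) + 1 = 2 * N + 1 + 1 + 1 by ring]
    simp only [Finset.sum_range_succ _ (2 * N + 1 + 1), Finset.sum_range_succ _ (2 * N + 1)]
    simp only [pow_succ, pow_mul]
    norm_num
    ring

/-- Since the degree `4` is less than `2p + 6`, the alternating sum vanishes and
the sum over odd `j` is half the full sum. -/
lemma odd_moment (a b c d e : ℝ) (p : ℕ) :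
    ∑ k ∈ Finset.range (p + 3), (fun j : ℝ => a + b * j + c * (j * (j - 1)) +
        d * (j * ((j - 1) * (j - 2))) + e * (j * ((j - 1) * ((j - 2) * (j - 3)))))
          (2 * k + 1) * (2 * p + 6).choose (2 * k + 1) =
      2 ^ (2 * p + 1) * (16 * a + 8 * b * (2 * p + 6) + 4 * c * ((2 * p + 6) * (2 * p + 5)) +
        2 * d * ((2 * p + 6) * (2 * p + 5) * (2 * p + 4)) +
        e * ((2 * p + 6) * (2 * p + 5) * (2 * p + 4) * (2 * p + 3))) := by
  have h := sum_odd (fun j : ℕ => (fun j : ℝ => a + b * j + c * (j * (j - 1)) +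
        d * (j * ((j - 1) * (j - 2))) + e * (j * ((j - 1) * ((j - 2) * (j - 3)))))
          j * (2 * p + 6).choose j) (p + 3)
  have hp := quartic_moment a b c d e (2 * p + 2) 1
  have hm := quartic_moment a b c d e (2 * p + 2) (-1)
  rw [show 2 * (p + 3) + 1 = 2 * p + 2 + 5 by ring] at h
  simp only [mul_assoc _ (Nat.cast (Nat.choose _ _)) _] at h
  push_cast at h hp hm ⊢
  rw [h, hp, hm]
  norm_num [pow_succ, pow_mul]
  ring

/-- The sum over `1 ≤ k ≤ n - 1`, for `n = p + 2`, extends to `0 ≤ k ≤ n`: the end terms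
`k = 0` and `k = n` carry the weight `k (n - k) = 0`. -/
lemma sum_minuscule (g : ℝ → ℝ) (p : ℕ) :
    ∑ k ∈ Finset.Icc 1 (p + 2 - 1), g k * minusculeCoeff (p + 2) k =
      (∑ k ∈ Finset.range (p + 3), g k * (k * ((p + 2) - k)) *
        (2 * p + 6).choose (2 * k + 1)) / (4 * p + 10) := by
  have hsub : Finset.Icc 1 (p + 2 - 1) ⊆ Finset.range (p + 3) := by
    intro k; simp only [Finset.mem_Icc, Finset.mem_range]; omega
  have hz : ∀ k ∈ Finset.range (p + 3), k ∉ Finset.Icc 1 (p + 2 - 1) →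
      g k * minusculeCoeff (p + 2) k = 0 := by
    intro k hk hk'
    simp only [Finset.mem_Icc, Finset.mem_range] at hk hk'
    have : k = 0 ∨ k = p + 2 := by omega
    rcases this with rfl | rfl <;> simp [minusculeCoeff]
  rw [Finset.sum_subset hsub hz, Finset.sum_div]
  refine Finset.sum_congr rfl fun k hk => ?_
  have hk : k ≤ p + 2 := by simp only [Finset.mem_range] at hk; omega
  rw [minusculeCoeff, show 2 * (p + 2) + 2 = 2 * p + 6 by ring]
  push_cast [Nat.cast_sub hk]
  rw [show 4 * ((p : ℝ) + 2) + 2 = 4 * p + 10 by ring]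
  ring

lemma sum_coeff (p : ℕ) :
    ∑ k ∈ Finset.Icc 1 (p + 2 - 1), minusculeCoeff (p + 2) k = (p + 1) * 2 ^ (2 * p + 1) := by
  have h := sum_minuscule (fun _ => 1) p
  simp only [one_mul] at h
  have hp : (4 * (p : ℝ) + 10) ≠ 0 := by positivity
  rw [h, div_eq_iff hp]
  -- `4k(n - k) = -(2n + 1) + (2n + 1) j - j(j - 1)`, where `n = p + 2`, `j = 2k + 1`.
  refine Eq.trans ?_ ((odd_moment (-(2 * p + 5) / 4) ((2 * p + 5) / 4) (-1 / 4) 0 0 p).trans ?_)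
  · refine Finset.sum_congr rfl fun k _ => ?_
    ring
  · ring

lemma sum_sq_coeff (p : ℕ) :
    ∑ k ∈ Finset.Icc 1 (p + 2 - 1), (2 * (k : ℝ) - (p + 2)) ^ 2 * minusculeCoeff (p + 2) k =
      (p : ℝ) * (p + 3) * 2 ^ (2 * p) := by
  have h := sum_minuscule (fun t => (2 * t - (p + 2)) ^ 2) p
  have hp : (4 * (p : ℝ) + 10) ≠ 0 := by positivity
  rw [h, div_eq_iff hp]
  -- Newton interpolation at `j = 0, 1, 2, 3`, with leading coefficient `-1 / 4`, of the weight
  -- `(j - 1)(2n + 1 - j)(j - n - 1)² / 4`, where `n = p + 2`.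
  refine Eq.trans ?_ ((odd_moment (-((2 * p + 5) * (p + 3) ^ 2) / 4)
    ((2 * p + 5) * (p + 3) ^ 2 / 4)
    (((2 * p + 3) * (p + 1) ^ 2 - (2 * p + 5) * (p + 3) ^ 2) / 8)
    ((4 * (p + 1) * p ^ 2 - 3 * ((2 * p + 3) * (p + 1) ^ 2) + (2 * p + 5) * (p + 3) ^ 2) / 24)
    (-1 / 4) p).trans ?_)
  · refine Finset.sum_congr rfl fun k _ => ?_
    ring
  · ring

/-- For `n ≥ 2`, the variance of the coefficient distribution of `N_n` satisfies
`∑_{k=1}^{n-1} (k − n/2)² N_{n,k} / N_n(1) = (n² − n − 2)/(8(n−1))`, where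
`N_n(1) = (n−1)2^{2n−3}`; equivalently
`∑_{k=1}^{n-1} (2k − n)² N_{n,k} = (n² − n − 2)·2^{2n−4}`. -/
theorem minusculeN_variance (n : ℕ) (hn : 2 ≤ n) :
    ((∑ k ∈ Finset.Icc 1 (n - 1), ((k : ℝ) - n / 2) ^ 2 * minusculeCoeff n k) /
        (∑ k ∈ Finset.Icc 1 (n - 1), minusculeCoeff n k) =
      ((n : ℝ) ^ 2 - n - 2) / (8 * ((n : ℝ) - 1))) ∧
    ∑ k ∈ Finset.Icc 1 (n - 1), (2 * (k : ℝ) - n) ^ 2 * minusculeCoeff n k =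
      ((n : ℝ) ^ 2 - n - 2) * 2 ^ (2 * n - 4) := by
  obtain ⟨p, rfl⟩ := Nat.exists_eq_add_of_le' hn
  have h2 : ∑ k ∈ Finset.Icc 1 (p + 2 - 1), (2 * (k : ℝ) - (p + 2 : ℕ)) ^ 2 *
      minusculeCoeff (p + 2) k = (p : ℝ) * (p + 3) * 2 ^ (2 * p) := by
    push_cast
    exact sum_sq_coeff p
  have h4 : ∑ k ∈ Finset.Icc 1 (p + 2 - 1), ((k : ℝ) - (p + 2 : ℕ) / 2) ^ 2 *
      minusculeCoeff (p + 2) k = (p : ℝ) * (p + 3) * 2 ^ (2 * p) / 4 := by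
    rw [← h2, Finset.sum_div]
    exact Finset.sum_congr rfl fun k _ => by ring
  refine ⟨?_, ?_⟩
  · rw [h4, sum_coeff]
    push_cast
    have hp : (p : ℝ) + 1 ≠ 0 := by positivity
    have hp' : (p : ℝ) + 2 - 1 ≠ 0 := by rw [show (p : ℝ) + 2 - 1 = p + 1 by ring]; exact hp
    rw [div_eq_div_iff (by positivity) (by simpa using hp')]
    ring
  · rw [h2, show 2 * (p + 2) - 4 = 2 * p by omega]
    push_cast
    ring
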